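/- Let Ω ⊂ ℝ^N (N ≥ 2) be a bounded connected open set, and let f : ℝ → ℝ be continuously differentiable with f(t) = p(t)·φ(t) for all t, where p : ℝ → ℝ satisfies p(t) > 0 for all t and φ : ℝ → ℝ is continuous and nonincreasing. Then every weak Neumann solution of −Δu = f(u) in Ω is constant on the closure of Ω. -/

import Mathlib

open MeasureTheory Bornology
open scoped RealInnerProductSpace

/-!
Testing the equation with `1` gives `∫_Ω f(u) = 0`, so by the mean value theorem for integrals
`f` vanishes at some value `a = u(x₀)`, `x₀ ∈ Ω`. Since the sign of `f` is nonincreasing,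
`f(t)(t - a) ≤ 0` for every `t`. Testing with `u - a` then gives
`∫_Ω |∇u|² = ∫_Ω f(u)(u - a) ≤ 0`, hence `∇u = 0` in the connected set `Ω`.
-/

section Sign

variable {α R : Type*} [Ring R] [LinearOrder R] [IsStrictOrderedRing R]

lemma antitone_sign_of_eq_mul [Preorder α] {f p φ : α → R} (hf : ∀ t, f t = p t * φ t)
    (hp : ∀ t, 0 < p t) (hφ : Antitone φ) : Antitone fun t ↦ SignType.sign (f t) := by
  simpa only [hf, sign_mul, sign_pos (hp _), one_mul, Function.comp_def] using
    SignType.sign.monotone.comp_antitone hφ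

lemma mul_sub_nonpos_of_antitone_sign {f : R → R} (hf : Antitone fun t ↦ SignType.sign (f t))
    {a : R} (ha : f a = 0) (t : R) : f t * (t - a) ≤ 0 := by
  have hsign_a : SignType.sign (f a) = 0 := sign_eq_zero_iff.2 ha
  rcases le_total t a with hta | hat
  · have hft : 0 ≤ f t := sign_nonneg_iff.1 (hsign_a ▸ hf hta)
    exact mul_nonpos_of_nonneg_of_nonpos hft (sub_nonpos.2 hta)
  · have hft : f t ≤ 0 := sign_nonpos_iff.1 (hsign_a ▸ hf hat)
    exact mul_nonpos_of_nonpos_of_nonneg hft (sub_nonneg.2 hat)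

end Sign

lemma eqOn_zero_of_setIntegral_nonpos {X : Type*} [TopologicalSpace X] [MeasurableSpace X]
    [OpensMeasurableSpace X] {μ : Measure X} [μ.IsOpenPosMeasure] {s : Set X} {g : X → ℝ}
    (hs : IsOpen s) (hg : ContinuousOn g s) (hint : IntegrableOn g s μ)
    (hg_nonneg : ∀ x ∈ s, 0 ≤ g x) (hle : ∫ x in s, g x ∂μ ≤ 0) : Set.EqOn g 0 s := by
  have hzero : ∫ x in s, g x ∂μ = 0 :=
    hle.antisymm (setIntegral_nonneg hs.measurableSet hg_nonneg)
  have hae : g =ᵐ[μ.restrict s] 0 :=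
    (setIntegral_eq_zero_iff_of_nonneg_ae
      (ae_restrict_of_forall_mem hs.measurableSet hg_nonneg) hint).1 hzero
  exact Measure.eqOn_open_of_ae_eq hae hs hg continuousOn_const

lemma exists_contDiff_eqOn_of_contDiffOn {E F : Type*} [NormedAddCommGroup E] [NormedSpace ℝ E]
    [FiniteDimensional ℝ E] [NormedAddCommGroup F] [NormedSpace ℝ F] {n : ℕ∞} {K V : Set E}
    {w : E → F} (hK : IsClosed K) (hV : IsOpen V) (hKV : K ⊆ V) (hw : ContDiffOn ℝ n w V) :
    ∃ W : E → F, ContDiff ℝ n W ∧ Set.EqOn W w K := by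
  obtain ⟨ψ, hψ_zero, hψ_one, -⟩ := exists_contMDiffMap_zero_one_nhds_of_isClosed (n := n)
    (modelWithCornersSelf ℝ E) hV.isClosed_compl hK (Set.disjoint_compl_left_iff_subset.2 hKV)
  refine ⟨fun x ↦ ψ x • w x, contDiff_iff_contDiffAt.2 fun x ↦ ?_, fun x hx ↦ ?_⟩
  · by_cases hx : x ∈ V
    · exact ψ.contMDiff.contDiff.contDiffAt.smul (hw.contDiffAt (hV.mem_nhds hx))
    · have hlocal : (fun y ↦ ψ y • w y) =ᶠ[nhds x] fun _ ↦ 0 := by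
        filter_upwards [hψ_zero.filter_mono (nhds_le_nhdsSet hx)] with y hy
        rw [hy, zero_smul]
      exact contDiffAt_const.congr_of_eventuallyEq hlocal
  · simp only [hψ_one.self_of_nhdsSet x hx, one_smul]

section Gradient

variable {E : Type*} [NormedAddCommGroup E] [InnerProductSpace ℝ E] [CompleteSpace E]
  {u : E → ℝ} {s : Set E}

lemma continuousOn_gradient_of_contDiffOn (hs : IsOpen s) (hu : ContDiffOn ℝ 1 u s) :
    ContinuousOn (gradient u) s :=
  (InnerProductSpace.toDual ℝ E).symm.continuous.comp_continuousOn
    (hu.continuousOn_fderiv_of_isOpen hs le_rfl)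

lemma gradient_sub_const (u : E → ℝ) (a : ℝ) (x : E) :
    gradient (fun y ↦ u y - a) x = gradient u x := by
  simp only [gradient, fderiv_sub_const]

lemma exists_forall_mem_closure_eq_of_gradient_eq_zero (hs : IsOpen s) (hs' : IsPreconnected s)
    (hu : DifferentiableOn ℝ u s) (hu_cont : ContinuousOn u (closure s))
    (hgrad : Set.EqOn (gradient u) 0 s) : ∃ c, ∀ x ∈ closure s, u x = c := by
  have hfderiv : Set.EqOn (fderiv ℝ u) 0 s := fun x hx ↦ by
    rw [← toDual_gradient, hgrad hx, Pi.zero_apply, map_zero, Pi.zero_apply]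
  obtain ⟨c, hc⟩ := hs.exists_is_const_of_fderiv_eq_zero hs' hu hfderiv
  have hEqOn : Set.EqOn u (fun _ ↦ c) s := hc
  exact ⟨c, hEqOn.of_subset_closure hu_cont continuousOn_const subset_closure subset_rfl⟩

end Gradient

/-- Weak solutions of `-Δu = f(u)` in `Ω` with homogeneous Neumann condition, where integrals are
taken with respect to an arbitrary reference measure `μ`. The boundary condition is encoded by
letting the test functions range over all `C¹` functions on the whole space. Regularity of `u`
is not part of the definition. -/
def IsWeakNeumannSolution {E : Type*} [NormedAddCommGroup E] [InnerProductSpace ℝ E]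
    [CompleteSpace E] [MeasurableSpace E] (μ : Measure E) (f : ℝ → ℝ) (Ω : Set E)
    (u : E → ℝ) : Prop :=
  ∀ φ : E → ℝ, ContDiff ℝ 1 φ →
    ∫ x in Ω, ⟪gradient u x, gradient φ x⟫ ∂μ = ∫ x in Ω, f (u x) * φ x ∂μ

namespace IsWeakNeumannSolution

variable {E : Type*} [NormedAddCommGroup E] [InnerProductSpace ℝ E] [MeasurableSpace E]
  {μ : Measure E} {f : ℝ → ℝ} {Ω V : Set E} {u : E → ℝ}

lemma setIntegral_eq_zero [CompleteSpace E] (h : IsWeakNeumannSolution μ f Ω u) :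
    ∫ x in Ω, f (u x) ∂μ = 0 := by
  simpa only [gradient_fun_const, inner_zero_right, integral_zero, mul_one] using
    (h (fun _ ↦ 1) contDiff_const).symm

variable [ProperSpace E] [OpensMeasurableSpace E]

lemma exists_mem_eq_zero [IsFiniteMeasureOnCompacts μ] [μ.IsOpenPosMeasure]
    (h : IsWeakNeumannSolution μ f Ω u) (hΩ_open : IsOpen Ω) (hΩ_bdd : IsBounded Ω)
    (hΩ_conn : IsConnected Ω) (hf : Continuous f) (hu : ContinuousOn u (closure Ω)) :
    ∃ x ∈ Ω, f (u x) = 0 := by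
  have hfu : ContinuousOn (fun x ↦ f (u x)) (closure Ω) := hf.comp_continuousOn hu
  have hint : IntegrableOn (fun x ↦ f (u x)) Ω μ :=
    (hfu.integrableOn_compact hΩ_bdd.isCompact_closure).mono_set subset_closure
  obtain ⟨x, hx, hmean⟩ := exists_eq_setAverage hΩ_conn (hfu.mono subset_closure) hint
    hΩ_bdd.measure_lt_top.ne (hΩ_open.measure_pos μ hΩ_conn.nonempty).ne'
  exact ⟨x, hx, by rw [hmean, setAverage_eq, h.setIntegral_eq_zero, smul_zero]⟩

lemma setIntegral_inner_gradient_eq_of_contDiffOn (h : IsWeakNeumannSolution μ f Ω u)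
    (hΩ : IsOpen Ω) (hV : IsOpen V) (hΩV : closure Ω ⊆ V) {w : E → ℝ}
    (hw : ContDiffOn ℝ 1 w V) :
    ∫ x in Ω, ⟪gradient u x, gradient w x⟫ ∂μ = ∫ x in Ω, f (u x) * w x ∂μ := by
  have : FiniteDimensional ℝ E := .of_locallyCompactSpace ℝ
  obtain ⟨W, hW, hWw⟩ := exists_contDiff_eqOn_of_contDiffOn isClosed_closure hV hΩV hw
  have hWw' : Set.EqOn W w Ω := hWw.mono subset_closure
  have hgrad : ∀ x ∈ Ω, gradient W x = gradient w x := fun x hx ↦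
    (hWw'.eventuallyEq_of_mem (hΩ.mem_nhds hx)).gradient_eq
  calc ∫ x in Ω, ⟪gradient u x, gradient w x⟫ ∂μ
      = ∫ x in Ω, ⟪gradient u x, gradient W x⟫ ∂μ :=
        setIntegral_congr_fun hΩ.measurableSet fun x hx ↦ by simp only [hgrad x hx]
    _ = ∫ x in Ω, f (u x) * W x ∂μ := h W hW
    _ = ∫ x in Ω, f (u x) * w x ∂μ :=
        setIntegral_congr_fun hΩ.measurableSet fun x hx ↦ by simp only [hWw' hx]

lemma setIntegral_norm_gradient_sq (h : IsWeakNeumannSolution μ f Ω u) (hΩ : IsOpen Ω)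
    (hV : IsOpen V) (hΩV : closure Ω ⊆ V) (hu : ContDiffOn ℝ 1 u V) (a : ℝ) :
    ∫ x in Ω, ‖gradient u x‖ ^ 2 ∂μ = ∫ x in Ω, f (u x) * (u x - a) ∂μ := by
  simpa only [gradient_sub_const, real_inner_self_eq_norm_sq] using
    h.setIntegral_inner_gradient_eq_of_contDiffOn hΩ hV hΩV (hu.sub (contDiffOn_const (c := a)))

lemma gradient_eqOn_zero [IsFiniteMeasureOnCompacts μ] [μ.IsOpenPosMeasure]
    (h : IsWeakNeumannSolution μ f Ω u) (hΩ_open : IsOpen Ω) (hΩ_bdd : IsBounded Ω)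
    (hV : IsOpen V) (hΩV : closure Ω ⊆ V) (hu : ContDiffOn ℝ 1 u V) {a : ℝ}
    (hsign : ∀ x ∈ Ω, f (u x) * (u x - a) ≤ 0) : Set.EqOn (gradient u) 0 Ω := by
  have henergy : ∫ x in Ω, ‖gradient u x‖ ^ 2 ∂μ ≤ 0 := by
    rw [h.setIntegral_norm_gradient_sq hΩ_open hV hΩV hu a]
    exact setIntegral_nonpos hΩ_open.measurableSet hsign
  have hcont : ContinuousOn (fun x ↦ ‖gradient u x‖ ^ 2) (closure Ω) :=
    ((continuousOn_gradient_of_contDiffOn hV hu).mono hΩV).norm.pow 2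
  have hint : IntegrableOn (fun x ↦ ‖gradient u x‖ ^ 2) Ω μ :=
    (hcont.integrableOn_compact hΩ_bdd.isCompact_closure).mono_set subset_closure
  have hzero : Set.EqOn (fun x ↦ ‖gradient u x‖ ^ 2) 0 Ω :=
    eqOn_zero_of_setIntegral_nonpos hΩ_open (hcont.mono subset_closure) hint
      (fun x _ ↦ sq_nonneg ‖gradient u x‖) henergy
  exact fun x hx ↦ norm_eq_zero.1 (sq_eq_zero_iff.1 (hzero hx))

end IsWeakNeumannSolution

theorem stmt_1_general {E : Type*} [NormedAddCommGroup E] [InnerProductSpace ℝ E] [ProperSpace E]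
    [MeasurableSpace E] [OpensMeasurableSpace E] {μ : Measure E} [IsFiniteMeasureOnCompacts μ]
    [μ.IsOpenPosMeasure] {Ω V : Set E} (hΩ_open : IsOpen Ω) (hΩ_bdd : IsBounded Ω)
    (hΩ_conn : IsConnected Ω) {f : ℝ → ℝ} (hf : Continuous f)
    (hf_sign : Antitone fun t ↦ SignType.sign (f t)) {u : E → ℝ} (hV_open : IsOpen V)
    (hΩV : closure Ω ⊆ V) (hu : ContDiffOn ℝ 1 u V) (hweak : IsWeakNeumannSolution μ f Ω u) :
    ∃ c : ℝ, ∀ x ∈ closure Ω, u x = c := by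
  have hu_cont : ContinuousOn u (closure Ω) := hu.continuousOn.mono hΩV
  obtain ⟨x₀, -, hx₀⟩ := hweak.exists_mem_eq_zero hΩ_open hΩ_bdd hΩ_conn hf hu_cont
  have hgrad : Set.EqOn (gradient u) 0 Ω := hweak.gradient_eqOn_zero hΩ_open hΩ_bdd hV_open hΩV hu
    fun x _ ↦ mul_sub_nonpos_of_antitone_sign hf_sign hx₀ (u x)
  exact exists_forall_mem_closure_eq_of_gradient_eq_zero hΩ_open hΩ_conn.isPreconnected
    ((hu.differentiableOn one_ne_zero).mono (subset_closure.trans hΩV)) hu_cont hgrad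

/-- If `f = p·φ` with `p > 0` and `φ` continuous nonincreasing, then every
weak Neumann solution of `-Δu = f(u)` in a bounded connected open `Ω ⊆ ℝ^N`, `N ≥ 2`, is
constant on `closure Ω`. -/
theorem stmt_1 {N : ℕ} (hN : 2 ≤ N)
    (Ω : Set (EuclideanSpace ℝ (Fin N))) (hΩ_open : IsOpen Ω)
    (hΩ_bdd : IsBounded Ω) (hΩ_conn : IsConnected Ω)
    (f p φ₀ : ℝ → ℝ) (hf : ContDiff ℝ 1 f)
    (hfact : ∀ t : ℝ, f t = p t * φ₀ t)
    (hp : ∀ t : ℝ, 0 < p t)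
    (hφ₀_cont : Continuous φ₀) (hφ₀_mono : Antitone φ₀)
    (u : EuclideanSpace ℝ (Fin N) → ℝ)
    (V : Set (EuclideanSpace ℝ (Fin N))) (hV_open : IsOpen V)
    (hV : closure Ω ⊆ V) (hu : ContDiffOn ℝ 1 u V)
    (hweak : ∀ φ : EuclideanSpace ℝ (Fin N) → ℝ, ContDiff ℝ 1 φ →
      ∫ x in Ω, ⟪gradient u x, gradient φ x⟫ = ∫ x in Ω, f (u x) * φ x) :
    ∃ c : ℝ, ∀ x ∈ closure Ω, u x = c :=
  stmt_1_general hΩ_open hΩ_bdd hΩ_conn hf.continuous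
    (antitone_sign_of_eq_mul hfact hp hφ₀_mono) hV_open hV hu hweak
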